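/- Let λ, μ ∈ P[n] and let T̃ be a set-valued contratableau of shape λ with entries ≤ n, with rows T̃_1,…,T̃_n indexed from the bottom. For 1≤i≤n and 1≤k≤n+1−i, let N^↑_{i,k} := μ_i + (number of occurrences of i in the rows T̃_k, T̃_{k+1},…,T̃_n). Then T̃ is μ-dominant if and only if N^↑_{i−1,k+1} ≥ N^↑_{i,k} for all 1 < i ≤ n and 1 ≤ k ≤ n+1−i. -/

import Mathlib

/-!
Fix `i ≥ 1` and compare the numbers of `i`'s and `(i+1)`'s in prefixes of `r(T_mu) * r(T)`.
Each row of a contratableau is read as a weakly decreasing word, so within a row every `i+1` is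
read before every `i`.  The comparison over all prefixes ending inside row `k` is therefore tightest
after the last `i+1` of that row, where it reads `N↑_{i+1,k} ≤ N↑_{i,k+1}`
(`prefixDom_iff_of_decreasing`, `prefixDom_contraRowWord`).  Prefixes ending inside `r(T_mu)` satisfy
the comparison because `mu` is a partition (`prefixDom_superWord`).

This gives the inequality for all `1 ≤ k ≤ n`.  For `k > n - i` it holds automatically: the shape is
right-justified with rows growing towards the bottom, so below an entry `v` in row `k` there is a
strictly increasing chain of `k - 1` further entries, whence `v + k ≤ n + 1` (`entry_add_row_le`).
Thus `i+1` does not occur in rows `k, …, n`, and the inequality follows from `mu_{i+1} ≤ mu_i`.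
-/

/-!
Common combinatorial definitions: partitions, (skew) set-valued tableaux,
contratableaux, reading words, dominance, Gelfand-Tsetlin patterns, and the
maps Υ and Ω.  Partitions are encoded as functions `ℕ → ℕ` whose parts are
`lam 1, lam 2, …` (with `lam 0 = 0` as a normalization).  Tableaux are encoded
as functions `ℕ → ℕ → Finset ℕ` assigning to each box (row, column), both
indexed from `1`, its (finite) set of entries, with value `∅` outside the
shape. -/

/-- `lam` is a partition with at most `n` nonzero parts `lam 1 ≥ lam 2 ≥ ⋯`. -/
def IsPartition (n : ℕ) (lam : ℕ → ℕ) : Prop :=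
  lam 0 = 0 ∧ (∀ i, 1 ≤ i → lam (i + 1) ≤ lam i) ∧ (∀ i, n < i → lam i = 0)

/-- `|lam|`, the sum of the parts of a partition in `P[n]`. -/
def sumParts (n : ℕ) (lam : ℕ → ℕ) : ℕ := ∑ i ∈ Finset.Icc 1 n, lam i

/-- The boxes of the skew Young diagram `lam/mu` (rows indexed from the top,
starting at `1`; columns from the left, starting at `1`). -/
def SkewBox (lam mu : ℕ → ℕ) (i j : ℕ) : Prop :=
  1 ≤ i ∧ mu i < j ∧ j ≤ lam i

/-- The boxes of the straight Young diagram of `mu`. -/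
def ShapeBox (mu : ℕ → ℕ) (i j : ℕ) : Prop :=
  1 ≤ i ∧ 1 ≤ j ∧ j ≤ mu i

/-- A semi-standard set-valued tableau with entries in `[n] = {1, …, n}` on a
given set `box` of boxes (rows indexed from the top): every box carries a
nonempty subset of `[n]`, rows weakly increase from left to right, columns
strictly increase from top to bottom, and the filling vanishes off the shape. -/
def IsSSVT (n : ℕ) (box : ℕ → ℕ → Prop) (T : ℕ → ℕ → Finset ℕ) : Prop :=
  (∀ i j, box i j → (T i j).Nonempty) ∧
  (∀ i j, box i j → T i j ⊆ Finset.Icc 1 n) ∧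
  (∀ i j, ¬ box i j → T i j = ∅) ∧
  (∀ i j, box i j → box i (j + 1) → ∀ a ∈ T i j, ∀ b ∈ T i (j + 1), a ≤ b) ∧
  (∀ i j, box i j → box (i + 1) j → ∀ a ∈ T i j, ∀ b ∈ T (i + 1) j, a < b)

/-- The boxes of the rotated shape `C(lam)` (for `lam ∈ P[n]`): the `j`-th row
from the *bottom* (`1 ≤ j ≤ n`) consists of `lam j` right-justified boxes, in
columns `lam 1 - lam j + 1, …, lam 1`. -/
def ContraBox (n : ℕ) (lam : ℕ → ℕ) (j c : ℕ) : Prop :=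
  1 ≤ j ∧ j ≤ n ∧ lam 1 - lam j < c ∧ c ≤ lam 1

/-- A set-valued contratableau of shape `lam` with entries in `[n]`: a
semi-standard set-valued tableau of shape `C(lam)`.  Here `T j c` is the box in
the `j`-th row from the bottom and column `c`; "columns strictly increase from
top to bottom" says entries of row `j+1` (which lies above row `j`) are
strictly smaller than those below them in row `j`. -/
def IsSVCT (n : ℕ) (lam : ℕ → ℕ) (T : ℕ → ℕ → Finset ℕ) : Prop :=
  (∀ j c, ContraBox n lam j c → (T j c).Nonempty) ∧
  (∀ j c, ContraBox n lam j c → T j c ⊆ Finset.Icc 1 n) ∧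
  (∀ j c, ¬ ContraBox n lam j c → T j c = ∅) ∧
  (∀ j c, ContraBox n lam j c → ContraBox n lam j (c + 1) →
    ∀ a ∈ T j c, ∀ b ∈ T j (c + 1), a ≤ b) ∧
  (∀ j c, ContraBox n lam j c → ContraBox n lam (j + 1) c →
    ∀ a ∈ T (j + 1) c, ∀ b ∈ T j c, a < b)

/-- The entries of one cell, read in decreasing order. -/
def cellWord (S : Finset ℕ) : List ℕ := (S.sort (· ≤ ·)).reverse

/-- The row word: rows are read from top to bottom, each row from right to
left, the entries of each cell in decreasing order (reading over the rectangle
with `R` rows and `W` columns, which covers the shape; cells off the shape are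
empty and contribute nothing). -/
def rowWordRect (R W : ℕ) (T : ℕ → ℕ → Finset ℕ) : List ℕ :=
  ((List.range R).map (fun i =>
    (((List.range W).reverse).map (fun j => cellWord (T (i + 1) (j + 1)))).flatten)).flatten

/-- The column word: columns are read from rightmost to leftmost, each column
from top to bottom, the entries of each cell in decreasing order. -/
def colWordRect (R W : ℕ) (T : ℕ → ℕ → Finset ℕ) : List ℕ :=
  (((List.range W).reverse).map (fun j =>
    ((List.range R).map (fun i => cellWord (T (i + 1) (j + 1)))).flatten)).flatten

/-- The row word of a contratableau whose rows are indexed from the bottom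
(`1, …, n`): rows are read from top to bottom (i.e. row `n` first), each row
from right to left, cell entries in decreasing order. -/
def contraRowWord (n W : ℕ) (T : ℕ → ℕ → Finset ℕ) : List ℕ :=
  (((List.range n).reverse).map (fun j =>
    (((List.range W).reverse).map (fun c => cellWord (T (j + 1) (c + 1)))).flatten)).flatten

/-- A word is dominant if every prefix contains at least as many `i`'s as
`(i+1)`'s, for every `i ≥ 1`. -/
def Dominant (u : List ℕ) : Prop :=
  ∀ t i, 1 ≤ i → (u.take t).count (i + 1) ≤ (u.take t).count i

/-- The row word of the superstandard tableau `T_lam` of shape and weight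
`lam` (its `i`-th row consists of `lam i` many `i`'s), for `lam ∈ P[n]`. -/
def superWord (n : ℕ) (lam : ℕ → ℕ) : List ℕ :=
  ((List.range n).map (fun i => List.replicate (lam (i + 1)) (i + 1))).flatten

/-- A word `u` is `lam`-dominant if `r(T_lam) * u` is dominant. -/
def LamDominant (n : ℕ) (lam : ℕ → ℕ) (u : List ℕ) : Prop :=
  Dominant (superWord n lam ++ u)

/-- The number of occurrences of the entry `v` in row `r` of `T`
(columns `1, …, W`). -/
def rowOcc (W : ℕ) (T : ℕ → ℕ → Finset ℕ) (r v : ℕ) : ℕ :=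
  ∑ c ∈ Finset.Icc 1 W, if v ∈ T r c then 1 else 0

/-- The number of occurrences of the entry `v` in `T` (the `v`-th coordinate
of the weight `wt T`), rows `1, …, R` and columns `1, …, W`. -/
def wtT (R W : ℕ) (T : ℕ → ℕ → Finset ℕ) (v : ℕ) : ℕ :=
  ∑ r ∈ Finset.Icc 1 R, rowOcc W T r v

/-- The total number of entries `|T|` of a set-valued tableau. -/
def sizeT (R W : ℕ) (T : ℕ → ℕ → Finset ℕ) : ℕ :=
  ∑ r ∈ Finset.Icc 1 R, ∑ c ∈ Finset.Icc 1 W, (T r c).card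

/-- A Gelfand-Tsetlin pattern of size `n`: a triangular array of integers
`x i j` (`1 ≤ j ≤ i ≤ n`) with `NE_{i,j} = x i j - x (i-1) j ≥ 0` and
`SE_{i,j} = x (i-1) j - x i (j+1) ≥ 0` for all `1 ≤ j < i ≤ n`, normalized to
vanish outside the triangle. -/
def IsGT (n : ℕ) (x : ℕ → ℕ → ℤ) : Prop :=
  (∀ i j, 1 ≤ j → j < i → i ≤ n → x (i - 1) j ≤ x i j ∧ x i (j + 1) ≤ x (i - 1) j) ∧
  (∀ i j, ¬ (1 ≤ j ∧ j ≤ i ∧ i ≤ n) → x i j = 0)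

/-- A GT pattern in `GT_ℤ(lam)`: bottom row equal to `lam`. -/
def IsGTZ (n : ℕ) (lam : ℕ → ℕ) (x : ℕ → ℕ → ℤ) : Prop :=
  IsGT n x ∧ ∀ j, 1 ≤ j → j ≤ n → x n j = (lam j : ℤ)

/-- A valid set of marks on a GT pattern: `M ⊆ {(i,j) : 1 ≤ j < i ≤ n` and
`SE_{i,j}(x) > 0}`. -/
def MarksOK (n : ℕ) (x : ℕ → ℕ → ℤ) (M : Finset (ℕ × ℕ)) : Prop :=
  ∀ p ∈ M, 1 ≤ p.2 ∧ p.2 < p.1 ∧ p.1 ≤ n ∧ 0 < x (p.1 - 1) p.2 - x p.1 (p.2 + 1)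

/-- A marked GT pattern in `MGT_ℤ(lam)`. -/
def IsMGTZ (n : ℕ) (lam : ℕ → ℕ) (x : ℕ → ℕ → ℤ) (M : Finset (ℕ × ℕ)) : Prop :=
  IsGTZ n lam x ∧ MarksOK n x M

/-- The map `Υ` from marked GT patterns to set-valued tableaux, in closed form:
the entry `i` lies in the box in row `r`, column `c` iff `x_{i-1,r} < c ≤ x_{i,r}`
(the horizontal strip `x^{(i)}/x^{(i-1)}` is filled with `i`'s), or `(i,r) ∈ M`
and `c = x_{i-1,r}` (for a mark, `i` is added to the rightmost box of row `r`
of `X^{(i-1)}`, the box containing `i-1` there). -/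
def Upsilon (n : ℕ) (x : ℕ → ℕ → ℤ) (M : Finset (ℕ × ℕ)) : ℕ → ℕ → Finset ℕ :=
  fun r c => (Finset.Icc 1 n).filter (fun i =>
    (x (i - 1) r < (c : ℤ) ∧ (c : ℤ) ≤ x i r) ∨ ((i, r) ∈ M ∧ (c : ℤ) = x (i - 1) r))

/-- The map `Ω` from marked GT patterns to set-valued contratableaux of shape
`lam`, in closed form.  Rows are indexed from the bottom and the box in row `j`
and column `c` is the `d`-th box from the right where `d = lam 1 + 1 - c`.
The entry `v = n + 1 - i` lies there iff `y_{i-1,j} < d ≤ y_{i,j}` (the boxes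
of `C(y^{(i)})/C(y^{(i-1)})` are filled with `n+1-i`), or `(i,j) ∈ M` and
`d = y_{i-1,j}` (for a mark, `n+1-i` is added to the leftmost box of row `j`
of `Y^{(i-1)}`, the box containing `n+2-i` there). -/
def Omega (n : ℕ) (lam : ℕ → ℕ) (y : ℕ → ℕ → ℤ) (M : Finset (ℕ × ℕ)) : ℕ → ℕ → Finset ℕ :=
  fun j c => (Finset.Icc 1 n).filter (fun v =>
    (y (n - v) j < (lam 1 : ℤ) + 1 - (c : ℤ) ∧ (lam 1 : ℤ) + 1 - (c : ℤ) ≤ y (n + 1 - v) j) ∨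
      ((n + 1 - v, j) ∈ M ∧ (lam 1 : ℤ) + 1 - (c : ℤ) = y (n - v) j))

/-- `N_{i,k} = lam i + (number of occurrences of i in the top k rows of T)`. -/
def Ndom (W : ℕ) (lam : ℕ → ℕ) (T : ℕ → ℕ → Finset ℕ) (i k : ℕ) : ℕ :=
  lam i + ∑ r ∈ Finset.Icc 1 k, rowOcc W T r i

/-- `N↑_{i,k} = mu i + (number of occurrences of i in rows k, k+1, …, n from
the bottom of a contratableau)`. -/
def Nup (n W : ℕ) (mu : ℕ → ℕ) (T : ℕ → ℕ → Finset ℕ) (i k : ℕ) : ℕ :=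
  mu i + ∑ r ∈ Finset.Icc k n, rowOcc W T r i

/-- The GT pattern `Y_T` with entries `y_{i,j} = N_{n-i+j, n-i}` (normalized to
`0` outside the triangle). -/
def Ypat (n W : ℕ) (lam : ℕ → ℕ) (T : ℕ → ℕ → Finset ℕ) : ℕ → ℕ → ℤ :=
  fun i j => if 1 ≤ j ∧ j ≤ i ∧ i ≤ n then (Ndom W lam T (n - i + j) (n - i) : ℤ) else 0

/-- The transported mark set `M' = {(n+1-j, i-j) : (i,j) ∈ M}`. -/
def MarksOf (n : ℕ) (M : Finset (ℕ × ℕ)) : Finset (ℕ × ℕ) :=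
  M.image (fun p => (n + 1 - p.2, p.1 - p.2))

/-- The stable Grothendieck polynomial `G_lam(x_1, …, x_n)`, a polynomial in
variables `X 1, …, X n`. -/
noncomputable def Groth (n : ℕ) (lam : ℕ → ℕ) : MvPolynomial ℕ ℤ :=
  ∑ᶠ T ∈ {T : ℕ → ℕ → Finset ℕ | IsSSVT n (ShapeBox lam) T},
    (-1 : MvPolynomial ℕ ℤ) ^ (sizeT n (lam 1) T - sumParts n lam) *
      ∏ k ∈ Finset.Icc 1 n, MvPolynomial.X k ^ wtT n (lam 1) T k

/-! ### Prefix comparison for a single pair of letters -/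

/-- Every prefix `p` of `u` satisfies `a + #(i+1 in p) ≤ b + #(i in p)`; here `a` and `b` stand for
the numbers of `i+1`'s and `i`'s already read before `u`. -/
def PrefixDom (i a b : ℕ) (u : List ℕ) : Prop :=
  ∀ t, a + (u.take t).count (i + 1) ≤ b + (u.take t).count i

lemma PrefixDom.le {i a b : ℕ} {u : List ℕ} (h : PrefixDom i a b u) : a ≤ b := by
  simpa using h 0

lemma prefixDom_nil {i a b : ℕ} : PrefixDom i a b [] ↔ a ≤ b := by
  simp [PrefixDom]

lemma prefixDom_cons {i a b x : ℕ} {u : List ℕ} :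
    PrefixDom i a b (x :: u) ↔
      a ≤ b ∧ PrefixDom i (a + if x = i + 1 then 1 else 0) (b + if x = i then 1 else 0) u := by
  constructor
  · intro h
    refine ⟨h.le, fun t => ?_⟩
    have := h (t + 1)
    simp only [List.take_succ_cons, List.count_cons, beq_iff_eq] at this
    omega
  · rintro ⟨h0, h⟩ (_ | t)
    · simpa using h0
    · have := h t
      simp only [List.take_succ_cons, List.count_cons, beq_iff_eq]
      omega

lemma prefixDom_append {i a b : ℕ} {u v : List ℕ} :
    PrefixDom i a b (u ++ v) ↔
      PrefixDom i a b u ∧ PrefixDom i (a + u.count (i + 1)) (b + u.count i) v := by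
  induction u generalizing a b with
  | nil =>
    simp only [List.nil_append, prefixDom_nil, List.count_nil, Nat.add_zero]
    exact ⟨fun h => ⟨h.le, h⟩, fun h => h.2⟩
  | cons x u ih =>
    simp only [List.cons_append, prefixDom_cons, ih, List.count_cons, beq_iff_eq, and_assoc,
      Nat.add_assoc, Nat.add_comm, Nat.add_left_comm]

/-- In a weakly decreasing word all letters `i+1` precede all letters `i`, so the tightest prefix
is the one ending at the last `i+1`. -/
lemma prefixDom_iff_of_decreasing {i a b : ℕ} {u : List ℕ} (hu : u.Pairwise (· ≥ ·)) :
    PrefixDom i a b u ↔ a + u.count (i + 1) ≤ b := by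
  induction u generalizing a b with
  | nil => simp [prefixDom_nil]
  | cons x u ih =>
    rw [List.pairwise_cons] at hu
    rw [prefixDom_cons, ih hu.2]
    simp only [List.count_cons, beq_iff_eq]
    by_cases hx : x = i
    · have h0 : u.count (i + 1) = 0 := by
        rw [List.count_eq_zero]
        intro hmem
        have := hu.1 _ hmem
        omega
      simp [hx, h0]
      omega
    · simp only [hx, if_false]
      omega

lemma dominant_iff_prefixDom (u : List ℕ) :
    Dominant u ↔ ∀ i, 1 ≤ i → PrefixDom i 0 0 u := by
  simp only [Dominant, PrefixDom, Nat.zero_add]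
  exact ⟨fun h i hi t => h t i hi, fun h t i hi => h i hi t⟩

/-! ### The word of the superstandard tableau -/

lemma superWord_succ (n : ℕ) (mu : ℕ → ℕ) :
    superWord (n + 1) mu = superWord n mu ++ List.replicate (mu (n + 1)) (n + 1) := by
  simp [superWord, List.range_succ]

lemma count_superWord (n : ℕ) (mu : ℕ → ℕ) (j : ℕ) :
    (superWord n mu).count j = if 1 ≤ j ∧ j ≤ n then mu j else 0 := by
  induction n with
  | zero =>
    rw [if_neg (by omega)]
    simp [superWord]
  | succ n ih =>
    rw [superWord_succ, List.count_append, ih, List.count_replicate]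
    by_cases h : j = n + 1
    · subst h
      simp
    · have h' : ¬ (n + 1 = j) := fun e => h e.symm
      have h2 : (1 ≤ j ∧ j ≤ n + 1) ↔ (1 ≤ j ∧ j ≤ n) := by omega
      simp [h', h2]

lemma prefixDom_superWord {mu : ℕ → ℕ} (hmu : ∀ i, 1 ≤ i → mu (i + 1) ≤ mu i) (n : ℕ) {i : ℕ}
    (hi : 1 ≤ i) : PrefixDom i 0 0 (superWord n mu) := by
  induction n with
  | zero => simp [superWord, prefixDom_nil]
  | succ n ih =>
    have hsorted : (List.replicate (mu (n + 1)) (n + 1)).Pairwise (· ≥ ·) := by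
      simp [List.pairwise_replicate]
    rw [superWord_succ, prefixDom_append, prefixDom_iff_of_decreasing hsorted]
    refine ⟨ih, ?_⟩
    rw [count_superWord, count_superWord, List.count_replicate]
    have := hmu i hi
    by_cases h : i = n
    · subst h
      simp [hi, this]
    · have h' : ¬ (n = i) := fun e => h e.symm
      simp only [beq_iff_eq, Nat.add_right_cancel_iff, h', if_false]
      split_ifs <;> omega

/-! ### Rows of a contratableau -/

/-- The word of row `j` (from the bottom): columns `W, …, 1`, each cell in decreasing order. -/
def contraRow (W : ℕ) (T : ℕ → ℕ → Finset ℕ) (j : ℕ) : List ℕ :=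
  (((List.range W).reverse).map (fun c => cellWord (T j (c + 1)))).flatten

lemma mem_cellWord {S : Finset ℕ} {v : ℕ} : v ∈ cellWord S ↔ v ∈ S := by
  simp [cellWord]

lemma count_cellWord (S : Finset ℕ) (v : ℕ) :
    (cellWord S).count v = if v ∈ S then 1 else 0 := by
  have hnd : (cellWord S).Nodup := by simp [cellWord, Finset.sort_nodup]
  rw [hnd.count]
  simp [mem_cellWord]

lemma count_contraRow (W : ℕ) (T : ℕ → ℕ → Finset ℕ) (j v : ℕ) :
    (contraRow W T j).count v = rowOcc W T j v := by
  induction W with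
  | zero => simp [contraRow, rowOcc]
  | succ W ih =>
    have h1 : contraRow (W + 1) T j = cellWord (T j (W + 1)) ++ contraRow W T j := by
      simp [contraRow, List.range_succ]
    rw [h1, List.count_append, ih, count_cellWord, rowOcc, rowOcc,
      Finset.sum_Icc_succ_top (by omega), Nat.add_comm]

lemma contraBox_of_mem {n : ℕ} {lam : ℕ → ℕ} {T : ℕ → ℕ → Finset ℕ} (hT : IsSVCT n lam T)
    {j c v : ℕ} (hv : v ∈ T j c) : ContraBox n lam j c := by
  by_contra h
  rw [hT.2.2.1 j c h] at hv
  simp at hv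

/-- Rows increase weakly also between non-adjacent cells; the cells in between are nonempty since
a row of the shape is an interval. -/
lemma row_le_of_lt {n : ℕ} {lam : ℕ → ℕ} {T : ℕ → ℕ → Finset ℕ} (hT : IsSVCT n lam T)
    {j c d a b : ℕ} (hcd : c < d) (ha : a ∈ T j c) (hb : b ∈ T j d) : a ≤ b := by
  induction d, hcd using Nat.le_induction generalizing b with
  | base => exact hT.2.2.2.1 j c (contraBox_of_mem hT ha) (contraBox_of_mem hT hb) a ha b hb
  | succ d hd ih =>
    have hbc := contraBox_of_mem hT ha
    have hbd := contraBox_of_mem hT hb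
    have hbox : ContraBox n lam j d := by
      unfold ContraBox at *
      omega
    obtain ⟨x, hx⟩ := hT.1 j d hbox
    exact (ih hx).trans (hT.2.2.2.1 j d hbox hbd x hx b hb)

lemma contraRow_decreasing {n : ℕ} {lam : ℕ → ℕ} {T : ℕ → ℕ → Finset ℕ} (hT : IsSVCT n lam T)
    (W j : ℕ) : (contraRow W T j).Pairwise (· ≥ ·) := by
  rw [contraRow, List.pairwise_flatten]
  constructor
  · intro l hl
    obtain ⟨c, -, rfl⟩ := List.mem_map.1 hl
    rw [cellWord, List.pairwise_reverse]
    exact Finset.pairwise_sort _ _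
  · rw [List.pairwise_map, List.pairwise_reverse]
    refine List.pairwise_lt_range.imp ?_
    intro c d hcd x hx y hy
    rw [mem_cellWord] at hx hy
    exact row_le_of_lt hT (Nat.succ_lt_succ hcd) hy hx

/-- An entry in row `k` from the bottom has a strictly increasing chain of `k - 1` entries below
it, all at most `n`. -/
lemma entry_add_row_le {n : ℕ} {lam : ℕ → ℕ} {T : ℕ → ℕ → Finset ℕ}
    (hlam : ∀ i, 1 ≤ i → lam (i + 1) ≤ lam i) (hT : IsSVCT n lam T)
    {k c v : ℕ} (hk : 1 ≤ k) (hv : v ∈ T k c) : v + k ≤ n + 1 := by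
  induction k, hk using Nat.le_induction generalizing v with
  | base =>
    have := Finset.mem_Icc.1 (hT.2.1 _ _ (contraBox_of_mem hT hv) hv)
    omega
  | succ k hk ih =>
    have hbk := contraBox_of_mem hT hv
    have hbox : ContraBox n lam k c := by
      have := hlam k hk
      unfold ContraBox at *
      omega
    obtain ⟨x, hx⟩ := hT.1 k c hbox
    have h1 := hT.2.2.2.2 k c hbox hbk v hv x hx
    have h2 := ih hx
    omega

/-! ### The whole reading word -/

lemma prefixDom_contraRowWord {n : ℕ} {lam : ℕ → ℕ} {T : ℕ → ℕ → Finset ℕ}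
    (hT : IsSVCT n lam T) (W i m : ℕ) {a b : ℕ} (hab : a ≤ b) :
    PrefixDom i a b (contraRowWord m W T) ↔
      ∀ k, 1 ≤ k → k ≤ m →
        a + ∑ r ∈ Finset.Icc k m, rowOcc W T r (i + 1) ≤
          b + ∑ r ∈ Finset.Icc (k + 1) m, rowOcc W T r i := by
  induction m generalizing a b with
  | zero =>
    simp only [contraRowWord, List.range_zero, List.reverse_nil, List.map_nil, List.flatten_nil,
      prefixDom_nil]
    exact ⟨fun _ k h1 h2 => by omega, fun _ => hab⟩
  | succ m ih =>
    have hsplit : contraRowWord (m + 1) W T = contraRow W T (m + 1) ++ contraRowWord m W T := by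
      simp [contraRowWord, contraRow, List.range_succ]
    rw [hsplit, prefixDom_append, prefixDom_iff_of_decreasing (contraRow_decreasing hT W (m + 1)),
      count_contraRow, count_contraRow]
    -- for `k ≤ m` both sums contain the top row `m + 1`
    have hstep : ∀ k, k ≤ m →
        ((a + rowOcc W T (m + 1) (i + 1)) + ∑ r ∈ Finset.Icc k m, rowOcc W T r (i + 1) ≤
          (b + rowOcc W T (m + 1) i) + ∑ r ∈ Finset.Icc (k + 1) m, rowOcc W T r i ↔
        a + ∑ r ∈ Finset.Icc k (m + 1), rowOcc W T r (i + 1) ≤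
          b + ∑ r ∈ Finset.Icc (k + 1) (m + 1), rowOcc W T r i) := by
      intro k hk
      rw [Finset.sum_Icc_succ_top (by omega), Finset.sum_Icc_succ_top (by omega)]
      omega
    constructor
    · rintro ⟨h0, h⟩ k hk1 hk2
      rcases Nat.lt_or_ge m k with hmk | hkm
      · obtain rfl : k = m + 1 := by omega
        simpa using h0
      · rw [← hstep k hkm]
        exact (ih (by omega)).1 h k hk1 hkm
    · intro h
      have h0 : a + rowOcc W T (m + 1) (i + 1) ≤ b := by
        simpa using h (m + 1) (by omega) le_rfl
      refine ⟨h0, (ih (by omega)).2 fun k hk1 hkm => ?_⟩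
      rw [hstep k hkm]
      exact h k hk1 (by omega)

/-- Dominance in terms of `N↑`, for all letters `i ≥ 1` and all rows `k`. -/
lemma lamDominant_iff_all {n : ℕ} {lam mu : ℕ → ℕ} (hmu : IsPartition n mu)
    {T : ℕ → ℕ → Finset ℕ} (hT : IsSVCT n lam T) (W : ℕ) :
    LamDominant n mu (contraRowWord n W T) ↔
      ∀ i, 1 ≤ i → ∀ k, 1 ≤ k → k ≤ n → Nup n W mu T (i + 1) k ≤ Nup n W mu T i (k + 1) := by
  have hcount : ∀ j, 1 ≤ j → (superWord n mu).count j = mu j := by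
    intro j hj
    rw [count_superWord]
    split_ifs with h
    · rfl
    · exact (hmu.2.2 j (by omega)).symm
  rw [LamDominant, dominant_iff_prefixDom]
  refine forall_congr' fun i => forall_congr' fun hi => ?_
  rw [prefixDom_append, hcount i hi, hcount (i + 1) (by omega), Nat.zero_add, Nat.zero_add,
    prefixDom_contraRowWord hT W i n (hmu.2.1 i hi)]
  exact and_iff_right (prefixDom_superWord hmu.2.1 n hi)

lemma Nup_eq_of_lt {n : ℕ} {lam : ℕ → ℕ} {T : ℕ → ℕ → Finset ℕ}
    (hlam : ∀ i, 1 ≤ i → lam (i + 1) ≤ lam i) (hT : IsSVCT n lam T) (W : ℕ) (mu : ℕ → ℕ)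
    {i k : ℕ} (hk : 1 ≤ k) (hik : n + 1 < i + k) : Nup n W mu T i k = mu i := by
  rw [Nup, Finset.sum_eq_zero, Nat.add_zero]
  intro r hr
  rw [rowOcc, Finset.sum_eq_zero]
  intro c _
  rw [if_neg]
  intro hmem
  have hr' := Finset.mem_Icc.1 hr
  have := entry_add_row_le hlam hT (by omega) hmem
  omega

/-- Let `lam, mu ∈ P[n]` and let `T` be a set-valued
contratableau of shape `lam` with entries `≤ n`, rows `T_1, …, T_n` indexed
from the bottom.  With `N↑_{i,k} = mu i + (number of occurrences of i in
rows T_k, …, T_n)`, the contratableau `T` is `mu`-dominant iff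
`N↑_{i-1,k+1} ≥ N↑_{i,k}` for all `1 < i ≤ n` and `1 ≤ k ≤ n+1-i`. -/
theorem muDominant_iff_Nup (n : ℕ) (hn : 0 < n) (lam mu : ℕ → ℕ)
    (hlam : IsPartition n lam) (hmu : IsPartition n mu)
    (T : ℕ → ℕ → Finset ℕ) (hT : IsSVCT n lam T) :
    LamDominant n mu (contraRowWord n (lam 1) T) ↔
      ∀ i k, 1 < i → i ≤ n → 1 ≤ k → k ≤ n + 1 - i →
        Nup n (lam 1) mu T i k ≤ Nup n (lam 1) mu T (i - 1) (k + 1) := by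
  rw [lamDominant_iff_all hmu hT]
  constructor
  · intro h i k hi hin hk hkn
    obtain ⟨i, rfl⟩ : ∃ i', i = i' + 1 := ⟨i - 1, by omega⟩
    exact h i (by omega) k hk (by omega)
  · intro h i hi k hk hkn
    by_cases hik : i + 1 + k ≤ n + 1
    · exact h (i + 1) k (by omega) (by omega) hk (by omega)
    · rw [Nup_eq_of_lt hlam.2.1 hT (lam 1) mu hk (by omega)]
      exact (hmu.2.1 i hi).trans (Nat.le_add_right _ _)
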